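/- For every s > 1/2 there is a constant c_s > 0, depending only on s, such that for all d, m ∈ ℕ and every f ∈ F^{s,d}_mix, the Fourier partial sum over Λ = [-m, m]^d ∩ ℤ^d satisfies ‖f − P_Λ f‖_∞² ≤ d · c_s^d · m^{-(2s−1)}; consequently, N^∞(ε, F^{s,d}_mix) ≤ (d · c_s^d · ε^{-2})^{d/(2s−1)} for all ε > 0. -/

import Mathlib

open MeasureTheory Real Finset

noncomputable section

/-- The unit cube `[0,1]^d`. -/
def cube (d : ℕ) : Set (Fin d → ℝ) := Set.univ.pi fun _ => Set.Icc 0 1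

/-- The trigonometric character `e^{2πi⟨k,x⟩}`. -/
def eK (d : ℕ) (k : Fin d → ℤ) (x : Fin d → ℝ) : ℂ :=
  Complex.exp (2 * Real.pi * Complex.I * ∑ i, (k i : ℂ) * (x i : ℂ))

/-- The Fourier coefficient `f̂(k) = ∫_{[0,1]^d} f(x) e^{-2πi⟨k,x⟩} dx`. -/
def fCoeff (d : ℕ) (f : (Fin d → ℝ) → ℂ) (k : Fin d → ℤ) : ℂ :=
  ∫ x in cube d, f x * Complex.exp (-(2 * Real.pi * Complex.I) * ∑ i, (k i : ℂ) * (x i : ℂ))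

/-- `f` is 1-periodic in each coordinate. -/
def Periodic1 (d : ℕ) (f : (Fin d → ℝ) → ℂ) : Prop :=
  ∀ (x : Fin d → ℝ) (i : Fin d), f (Function.update x i (x i + 1)) = f x

/-- The weight `max(1, log ‖k‖_∞)`. -/
def logWeight (d : ℕ) (k : Fin d → ℤ) : ℝ :=
  max 1 (Real.log ((Finset.univ.sup fun i => (k i).natAbs : ℕ) : ℝ))

/-- The class `F_d^log` of continuous 1-periodic functions with
`∑_k |f̂(k)| max(1, log ‖k‖_∞) ≤ 1`. -/
def FdLog (d : ℕ) : Set ((Fin d → ℝ) → ℂ) :=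
  {f | Continuous f ∧ Periodic1 d f ∧
    Summable (fun k : Fin d → ℤ => ‖fCoeff d f k‖ * logWeight d k) ∧
    ∑' k : Fin d → ℤ, ‖fCoeff d f k‖ * logWeight d k ≤ 1}

/-- The mixed-smoothness weight `∏_{i=1}^d max(1, |k_i|^{2s})`. -/
def wMix (s : ℝ) (d : ℕ) (k : Fin d → ℤ) : ℝ :=
  ∏ i, max 1 (|(k i : ℝ)| ^ (2 * s))

/-- The unit ball `H^{s,d}_mix` of the Sobolev space of mixed smoothness `s`
(unweighted Korobov space). -/
def Hmix (s : ℝ) (d : ℕ) : Set ((Fin d → ℝ) → ℂ) :=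
  {f | Continuous f ∧ Periodic1 d f ∧
    Summable (fun k : Fin d → ℤ => ‖fCoeff d f k‖ ^ 2 * wMix s d k) ∧
    ∑' k : Fin d → ℤ, ‖fCoeff d f k‖ ^ 2 * wMix s d k ≤ 1}

/-- The class `F^{s,d}_mix` of functions in `H^{s,d}_mix` with absolutely summable
Fourier coefficients, `∑_k |f̂(k)| ≤ 1`. -/
def Fmix (s : ℝ) (d : ℕ) : Set ((Fin d → ℝ) → ℂ) :=
  {f | f ∈ Hmix s d ∧ Summable (fun k : Fin d → ℤ => ‖fCoeff d f k‖) ∧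
    ∑' k : Fin d → ℤ, ‖fCoeff d f k‖ ≤ 1}

/-- The cube of frequencies `[-m, m]^d ∩ ℤ^d`. -/
def boxZ (d m : ℕ) : Finset (Fin d → ℤ) :=
  Fintype.piFinset fun _ : Fin d => Finset.Icc (-(m : ℤ)) m

lemma periodic_int {d : ℕ} {f : (Fin d → ℝ) → ℂ} (hf : Periodic1 d f) (x : Fin d → ℝ)
    (i : Fin d) (n : ℤ) : f (Function.update x i (x i + n)) = f x := by
  induction n using Int.induction_on with
  | zero => simp
  | succ n ih =>
    have := hf (Function.update x i (x i + n)) i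
    simp only [Function.update_self, Function.update_idem] at this
    push_cast at ih ⊢
    rw [← add_assoc, this, ih]
  | pred n ih =>
    have := hf (Function.update x i (x i + (-(n:ℤ) - 1 : ℤ))) i
    simp only [Function.update_self, Function.update_idem] at this
    rw [← this, ← ih]
    push_cast
    congr 2
    ring

lemma periodic_vec {d : ℕ} {f : (Fin d → ℝ) → ℂ} (hf : Periodic1 d f) (x y : Fin d → ℝ)
    (h : ∀ i, ∃ n : ℤ, y i = x i + n) : f y = f x := by
  classical
  have key : ∀ S : Finset (Fin d), f (S.piecewise y x) = f x := by
    intro S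
    induction S using Finset.induction_on with
    | empty => simp
    | insert a S ha ih =>
      obtain ⟨n, hn⟩ := h a
      rw [Finset.piecewise_insert, ← ih, ← periodic_int hf (S.piecewise y x) a n,
        Finset.piecewise_eq_of_notMem _ _ _ ha, hn]
  simpa using key Finset.univ

lemma exists_lift {d : ℕ} {f : (Fin d → ℝ) → ℂ} (hc : Continuous f) (hf : Periodic1 d f) :
    ∃ F : C(UnitAddTorus (Fin d), ℂ), ∀ x : Fin d → ℝ, F (fun i => (x i : UnitAddCircle)) = f x := by
  have hq : IsOpenQuotientMap (Pi.map (fun (_ : Fin d) (t : ℝ) => (t : UnitAddCircle))) :=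
    IsOpenQuotientMap.piMap (fun _ => QuotientAddGroup.isOpenQuotientMap_mk)
  let F : UnitAddTorus (Fin d) → ℂ := fun t => f (Function.surjInv hq.surjective t)
  have hF : ∀ x : Fin d → ℝ, F (fun i => (x i : UnitAddCircle)) = f x := by
    intro x
    apply periodic_vec hf
    intro i
    have h1 := congrFun (Function.surjInv_eq hq.surjective (fun i => (x i : UnitAddCircle))) i
    simp only [Pi.map_apply] at h1
    obtain ⟨n, hn⟩ := (QuotientAddGroup.eq_iff_sub_mem.1 h1)
    refine ⟨n, ?_⟩
    simp at hn
    linarith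
  refine ⟨⟨F, ?_⟩, hF⟩
  rw [← hq.continuous_comp_iff]
  convert hc using 1
  ext x
  exact hF x

lemma mFourier_coe {d : ℕ} (k : Fin d → ℤ) (x : Fin d → ℝ) :
    UnitAddTorus.mFourier k (fun i => (x i : UnitAddCircle)) = eK d k x := by
  simp only [UnitAddTorus.mFourier, ContinuousMap.coe_mk, fourier_coe_apply, eK,
    ← Complex.exp_sum, Finset.mul_sum]
  congr 1
  apply Finset.sum_congr rfl
  intro i _
  push_cast
  ring

lemma fCoeff_eq {d : ℕ} {f : (Fin d → ℝ) → ℂ} (F : C(UnitAddTorus (Fin d), ℂ))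
    (hF : ∀ x : Fin d → ℝ, F (fun i => (x i : UnitAddCircle)) = f x) (k : Fin d → ℤ) :
    UnitAddTorus.mFourierCoeff F k = fCoeff d f k := by
  rw [UnitAddTorus.mFourierCoeff_eq_integral _ _ (fun _ => 0), fCoeff]
  have hset : {x : Fin d → ℝ | ∀ i, x i ∈ Set.Ioc (0:ℝ) (0 + 1)}
      = Set.univ.pi fun _ => Set.Ioc (0:ℝ) 1 := by
    ext x; simp
  rw [hset, cube]
  have : (Set.univ.pi fun _ : Fin d => Set.Ioc (0:ℝ) 1) =ᵐ[volume]
      (Set.univ.pi fun _ : Fin d => Set.Icc (0:ℝ) 1) := by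
    have h := Measure.univ_pi_Ioc_ae_eq_Icc (μ := fun _ : Fin d => (volume : Measure ℝ))
      (f := fun _ => (0:ℝ)) (g := fun _ => (1:ℝ))
    rw [← Set.pi_univ_Icc] at h
    exact h
  rw [setIntegral_congr_set this]
  congr 1
  ext x
  rw [hF, mFourier_coe, smul_eq_mul, mul_comm, eK]
  congr 2
  simp [Finset.sum_neg_distrib]

lemma hasSum_fourier {d : ℕ} {f : (Fin d → ℝ) → ℂ} (hc : Continuous f) (hf : Periodic1 d f)
    (hs : Summable (fun k : Fin d → ℤ => ‖fCoeff d f k‖)) (x : Fin d → ℝ) :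
    HasSum (fun k => fCoeff d f k * eK d k x) (f x) := by
  obtain ⟨F, hF⟩ := exists_lift hc hf
  have h1 : Summable (UnitAddTorus.mFourierCoeff F) := by
    have : UnitAddTorus.mFourierCoeff F = fCoeff d f := funext (fCoeff_eq F hF)
    rw [this]
    exact hs.of_norm
  have := UnitAddTorus.hasSum_mFourier_series_apply_of_summable h1 (fun i => (x i : UnitAddCircle))
  simpa only [fCoeff_eq F hF, hF, mFourier_coe, smul_eq_mul] using this

lemma norm_eK {d : ℕ} (k : Fin d → ℤ) (x : Fin d → ℝ) : ‖eK d k x‖ = 1 := by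
  have : (2 * Real.pi * Complex.I * ∑ i, (k i : ℂ) * (x i : ℂ))
      = ((2 * Real.pi * ∑ i, (k i : ℝ) * (x i : ℝ) : ℝ) : ℂ) * Complex.I := by
    push_cast; ring
  rw [eK, this, Complex.norm_exp_ofReal_mul_I]

def gW (s : ℝ) (j : ℤ) : ℝ := (max 1 (|(j : ℝ)| ^ (2 * s)))⁻¹

lemma gW_nonneg (s : ℝ) (j : ℤ) : 0 ≤ gW s j := by
  unfold gW; positivity

lemma gW_le_one (s : ℝ) (j : ℤ) : gW s j ≤ 1 :=
  inv_le_one_of_one_le₀ (le_max_left _ _)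

lemma gW_le (s : ℝ) (j : ℤ) (hj : 0 < j.natAbs) : gW s j ≤ (j.natAbs : ℝ) ^ (-(2 * s)) := by
  have h : (0:ℝ) < j.natAbs := by exact_mod_cast hj
  have h2 : |(j : ℝ)| = (j.natAbs : ℝ) := by simp
  rw [Real.rpow_neg h.le, gW, h2]
  exact inv_anti₀ (Real.rpow_pos_of_pos h _) (le_max_right _ _)

lemma nat_tail (s : ℝ) (hs : 1/2 < s) (m M : ℕ) (hm : 1 ≤ m) :
    ∑ n ∈ Finset.Ioc m M, (n : ℝ) ^ (-(2 * s)) ≤ (m : ℝ) ^ (-(2 * s - 1)) / (2 * s - 1) := by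
  have hm0 : (0:ℝ) < m := by exact_mod_cast hm
  rcases le_or_gt m M with h | h
  · have hmM : (m:ℝ) ≤ M := by exact_mod_cast h
    have h1 := AntitoneOn.sum_le_integral_Ico (f := fun x : ℝ => x ^ (-(2 * s))) h (by
      intro x hx y hy hxy
      exact Real.rpow_le_rpow_of_nonpos (hm0.trans_le hx.1) hxy (by linarith))
    have h2 : ∑ n ∈ Finset.Ioc m M, (n : ℝ) ^ (-(2 * s))
        = ∑ i ∈ Finset.Ico m M, ((i + 1 : ℕ) : ℝ) ^ (-(2 * s)) := by
      rw [Finset.sum_Ico_add' (fun n : ℕ => (n : ℝ) ^ (-(2 * s))) m M 1]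
      congr 1
      ext n
      simp only [Finset.mem_Ioc, Finset.mem_Ico]
      omega
    rw [h2]
    refine h1.trans ?_
    rw [integral_rpow (Or.inr ⟨by linarith, by
      rw [Set.uIcc_of_le hmM]; intro h; linarith [h.1]⟩)]
    have e : -(2 * s) + 1 = -(2 * s - 1) := by ring
    rw [e, div_neg, ← neg_div]
    have : (0:ℝ) ≤ (M:ℝ) ^ (-(2 * s - 1)) := Real.rpow_nonneg (by positivity) _
    apply div_le_div_of_nonneg_right _ (by linarith)
    linarith
  · rw [Finset.Ioc_eq_empty_of_le h.le]
    simp only [Finset.sum_empty]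
    exact div_nonneg (Real.rpow_nonneg hm0.le _) (by linarith)

lemma int_tail (s : ℝ) (hs : 1/2 < s) (m M : ℕ) (hm : 1 ≤ m) :
    ∑ j ∈ (Finset.Icc (-(M:ℤ)) M).filter (fun j => m < j.natAbs), gW s j
      ≤ 2 * ((m : ℝ) ^ (-(2 * s - 1)) / (2 * s - 1)) := by
  have hmaps : ∀ j ∈ (Finset.Icc (-(M:ℤ)) M).filter (fun j => m < j.natAbs),
      j.natAbs ∈ Finset.Ioc m M := by
    intro j hj
    simp only [Finset.mem_filter, Finset.mem_Icc, Finset.mem_Ioc] at hj ⊢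
    omega
  rw [← Finset.sum_fiberwise_of_maps_to hmaps]
  calc _ ≤ ∑ n ∈ Finset.Ioc m M, 2 * (n : ℝ) ^ (-(2 * s)) := by
        apply Finset.sum_le_sum
        intro n hn
        have hn1 := (Finset.mem_Ioc.1 hn).1
        refine (Finset.sum_le_card_nsmul _ _ ((n : ℝ) ^ (-(2 * s))) ?_).trans ?_
        · intro j hj
          have hjn := (Finset.mem_filter.1 hj).2
          have := gW_le s j (by omega)
          rwa [hjn] at this
        · rw [nsmul_eq_mul]
          apply mul_le_mul_of_nonneg_right _ (Real.rpow_nonneg (by positivity) _)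
          have : (Finset.filter (fun j : ℤ => j.natAbs = n)
            ((Finset.Icc (-(M:ℤ)) M).filter (fun j => m < j.natAbs))) ⊆ {(n:ℤ), -(n:ℤ)} := by
            intro j hj
            have hjn := (Finset.mem_filter.1 hj).2
            simp only [Finset.mem_insert, Finset.mem_singleton]
            omega
          exact_mod_cast (Finset.card_le_card this).trans Finset.card_le_two
    _ ≤ _ := by
        rw [← Finset.mul_sum]
        exact mul_le_mul_of_nonneg_left (nat_tail s hs m M hm) (by norm_num)

lemma exists_K (s : ℝ) (hs : 1/2 < s) : ∃ K : ℝ, 1 ≤ K ∧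
    (∀ M : ℕ, ∑ j ∈ Finset.Icc (-(M:ℤ)) M, gW s j ≤ K) ∧
    ∀ m M : ℕ, 1 ≤ m → ∑ j ∈ (Finset.Icc (-(M:ℤ)) M).filter (fun j => m < j.natAbs), gW s j
      ≤ K * (m : ℝ) ^ (-(2 * s - 1)) := by
  have ha : 0 < 2 * s - 1 := by linarith
  have ha' : 0 < 2 / (2 * s - 1) := by positivity
  refine ⟨3 + 2 / (2 * s - 1), by linarith, ?_, ?_⟩
  · intro M
    rw [← Finset.sum_filter_not_add_sum_filter _ (fun j : ℤ => 1 < j.natAbs)]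
    apply add_le_add
    · refine (Finset.sum_le_card_nsmul _ _ 1 (fun j _ => gW_le_one s j)).trans ?_
      have : (Finset.filter (fun j : ℤ => ¬ 1 < j.natAbs) (Finset.Icc (-(M:ℤ)) M))
          ⊆ Finset.Icc (-1) 1 := by
        intro j hj
        have hjn := (Finset.mem_filter.1 hj).2
        rw [Finset.mem_Icc]; omega
      have := Finset.card_le_card this
      have h3 : (Finset.Icc (-1:ℤ) 1).card = 3 := by decide
      rw [h3] at this
      simp only [nsmul_eq_mul, mul_one]
      exact_mod_cast this
    · have := int_tail s hs 1 M le_rfl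
      simp only [Nat.cast_one, Real.one_rpow] at this
      refine this.trans (le_of_eq (by ring))
  · intro m M hm
    refine (int_tail s hs m M hm).trans ?_
    have : (0:ℝ) ≤ (m:ℝ) ^ (-(2 * s - 1)) := Real.rpow_nonneg (by positivity) _
    have e : 2 * ((m : ℝ) ^ (-(2 * s - 1)) / (2 * s - 1))
      = 2 / (2 * s - 1) * (m : ℝ) ^ (-(2 * s - 1)) := by ring
    rw [e]
    apply mul_le_mul_of_nonneg_right _ this
    linarith

lemma sum_biUnion_le' {α β : Type*} [DecidableEq α] [DecidableEq β] (S : Finset α)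
    (t : α → Finset β) (g : β → ℝ) (hg : ∀ b, 0 ≤ g b) :
    ∑ b ∈ S.biUnion t, g b ≤ ∑ a ∈ S, ∑ b ∈ t a, g b := by
  induction S using Finset.induction_on with
  | empty => simp
  | insert a S ha ih =>
    rw [Finset.biUnion_insert, Finset.sum_insert ha]
    have h1 := Finset.sum_union_inter (s₁ := t a) (s₂ := S.biUnion t) (f := g)
    have h2 : 0 ≤ ∑ b ∈ t a ∩ S.biUnion t, g b := Finset.sum_nonneg fun b _ => hg b
    linarith

lemma sum_compl_box {s K : ℝ} (hK1 : 1 ≤ K)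
    (hK : ∀ M : ℕ, ∑ j ∈ Finset.Icc (-(M:ℤ)) M, gW s j ≤ K)
    (hT : ∀ m M : ℕ, 1 ≤ m →
      ∑ j ∈ (Finset.Icc (-(M:ℤ)) M).filter (fun j => m < j.natAbs), gW s j
      ≤ K * (m : ℝ) ^ (-(2 * s - 1)))
    (d m : ℕ) (hm : 1 ≤ m) (Λ : Finset (Fin d → ℤ)) (hΛ : ∀ k ∈ Λ, k ∉ boxZ d m) :
    ∑ k ∈ Λ, (wMix s d k)⁻¹ ≤ d * K ^ d * (m : ℝ) ^ (-(2 * s - 1)) := by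
  classical
  have hw : ∀ k, (wMix s d k)⁻¹ = ∏ i, gW s (k i) := by
    intro k; simp [wMix, gW, Finset.prod_inv_distrib]
  simp_rw [hw]
  -- choose M
  let M : ℕ := Λ.sup fun k => Finset.univ.sup fun i => (k i).natAbs
  have hM : ∀ k ∈ Λ, ∀ i, (k i).natAbs ≤ M := by
    intro k hk i
    exact (Finset.le_sup (f := fun i => (k i).natAbs) (Finset.mem_univ i)).trans
      (Finset.le_sup (f := fun k : Fin d → ℤ => Finset.univ.sup fun i => (k i).natAbs) hk)
  let I : Finset ℤ := Finset.Icc (-(M:ℤ)) M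
  let J : Finset ℤ := I.filter (fun j => m < j.natAbs)
  let t : Fin d → Fin d → Finset ℤ := fun i j => if j = i then J else I
  have hsub : Λ ⊆ Finset.univ.biUnion fun i => Fintype.piFinset (t i) := by
    intro k hk
    have h1 := hΛ k hk
    simp only [boxZ, Fintype.mem_piFinset, Finset.mem_Icc, not_forall] at h1
    obtain ⟨i, hi⟩ := h1
    rw [Finset.mem_biUnion]
    refine ⟨i, Finset.mem_univ _, ?_⟩
    rw [Fintype.mem_piFinset]
    intro j
    have hj := hM k hk j
    by_cases hji : j = i
    · subst hji
      simp only [t, if_true, J, I, Finset.mem_filter, Finset.mem_Icc]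
      omega
    · simp only [t, if_neg hji, I, Finset.mem_Icc]
      omega
  have hnn : ∀ k : Fin d → ℤ, 0 ≤ ∏ i, gW s (k i) :=
    fun k => Finset.prod_nonneg fun i _ => gW_nonneg s _
  calc ∑ k ∈ Λ, ∏ i, gW s (k i)
      ≤ ∑ k ∈ Finset.univ.biUnion fun i => Fintype.piFinset (t i), ∏ i, gW s (k i) :=
        Finset.sum_le_sum_of_subset_of_nonneg hsub fun k _ _ => hnn k
    _ ≤ ∑ i, ∑ k ∈ Fintype.piFinset (t i), ∏ i, gW s (k i) :=
        sum_biUnion_le' _ _ _ hnn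
    _ ≤ ∑ i : Fin d, K ^ d * (m : ℝ) ^ (-(2 * s - 1)) := by
        apply Finset.sum_le_sum
        intro i _
        rw [← Finset.prod_univ_sum]
        calc ∏ j, ∑ l ∈ t i j, gW s l
            ≤ ∏ j, K * (if j = i then (m : ℝ) ^ (-(2 * s - 1)) else 1) := by
              apply Finset.prod_le_prod
              · intro j _; exact Finset.sum_nonneg fun l _ => gW_nonneg s l
              · intro j _
                by_cases hji : j = i
                · simp only [t, if_pos hji]; exact hT m M hm
                · simp only [t, if_neg hji, mul_one]; exact hK M
          _ = _ := by
              rw [Finset.prod_mul_distrib]; simp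
    _ = _ := by simp; ring

lemma part1 {s K : ℝ} (hK1 : 1 ≤ K)
    (hK : ∀ M : ℕ, ∑ j ∈ Finset.Icc (-(M:ℤ)) M, gW s j ≤ K)
    (hT : ∀ m M : ℕ, 1 ≤ m →
      ∑ j ∈ (Finset.Icc (-(M:ℤ)) M).filter (fun j => m < j.natAbs), gW s j
      ≤ K * (m : ℝ) ^ (-(2 * s - 1)))
    (d m : ℕ) (hm : 1 ≤ m) (f : (Fin d → ℝ) → ℂ) (hf : f ∈ Fmix s d) (x : Fin d → ℝ) :
    ‖f x - ∑ k ∈ boxZ d m, fCoeff d f k * eK d k x‖ ^ 2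
            ≤ d * K ^ d * (m : ℝ) ^ (-(2 * s - 1)) := by
  classical
  obtain ⟨⟨hc, hp, hs2, hs2'⟩, hs1, hs1'⟩ := hf
  have hsum := hasSum_fourier hc hp hs1 x
  have hlim : Filter.Tendsto (fun Λ : Finset (Fin d → ℤ) =>
      ‖∑ k ∈ Λ, fCoeff d f k * eK d k x - ∑ k ∈ boxZ d m, fCoeff d f k * eK d k x‖ ^ 2)
      Filter.atTop (nhds (‖f x - ∑ k ∈ boxZ d m, fCoeff d f k * eK d k x‖ ^ 2)) :=
    ((hsum.sub_const _).norm).pow 2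
  refine le_of_tendsto hlim ?_
  filter_upwards [Filter.eventually_ge_atTop (boxZ d m)] with Λ hΛ
  rw [← Finset.sum_sdiff hΛ, add_sub_cancel_right]
  have hwpos : ∀ k, 0 < wMix s d k := fun k =>
    Finset.prod_pos fun i _ => lt_of_lt_of_le one_pos (le_max_left _ _)
  have h1 : ‖∑ k ∈ Λ \ boxZ d m, fCoeff d f k * eK d k x‖ ≤ ∑ k ∈ Λ \ boxZ d m, ‖fCoeff d f k‖ := by
    refine (norm_sum_le _ _).trans (le_of_eq ?_)
    simp [norm_eK]
  have h2 : (∑ k ∈ Λ \ boxZ d m, ‖fCoeff d f k‖) ^ 2 ≤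
      (∑ k ∈ Λ \ boxZ d m, ‖fCoeff d f k‖ ^ 2 * wMix s d k) *
        ∑ k ∈ Λ \ boxZ d m, (wMix s d k)⁻¹ := by
    apply Finset.sum_sq_le_sum_mul_sum_of_sq_le_mul
    · intro k _; have := hwpos k; positivity
    · intro k _; have := hwpos k; positivity
    · intro k _; have := (hwpos k).ne'; apply le_of_eq; field_simp
  have h3 : ∑ k ∈ Λ \ boxZ d m, ‖fCoeff d f k‖ ^ 2 * wMix s d k ≤ 1 :=
    (hs2.sum_le_tsum _ (fun k _ => by have := hwpos k; positivity)).trans hs2'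
  have h4 := sum_compl_box hK1 hK hT d m hm (Λ \ boxZ d m)
    (fun k hk => (Finset.mem_sdiff.1 hk).2)
  have h5 : 0 ≤ ∑ k ∈ Λ \ boxZ d m, (wMix s d k)⁻¹ :=
    Finset.sum_nonneg fun k _ => (inv_pos.2 (hwpos k)).le
  calc _ ≤ (∑ k ∈ Λ \ boxZ d m, ‖fCoeff d f k‖) ^ 2 := by gcongr
    _ ≤ _ := h2
    _ ≤ 1 * ∑ k ∈ Λ \ boxZ d m, (wMix s d k)⁻¹ := by gcongr
    _ ≤ _ := by rw [one_mul]; exact h4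

lemma norm_le_one_of_Fmix {s : ℝ} {d : ℕ} {f : (Fin d → ℝ) → ℂ} (hf : f ∈ Fmix s d)
    (x : Fin d → ℝ) : ‖f x‖ ≤ 1 := by
  obtain ⟨⟨hc, hp, hs2, hs2'⟩, hs1, hs1'⟩ := hf
  have hsum := hasSum_fourier hc hp hs1 x
  rw [← hsum.tsum_eq]
  have e : (fun k => ‖fCoeff d f k * eK d k x‖) = fun k => ‖fCoeff d f k‖ := by
    ext k; simp [norm_eK]
  refine (norm_tsum_le_tsum_norm (by rw [e]; exact hs1)).trans ?_
  rw [e]; exact hs1'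

/-- for `s > 1/2` there is `c_s > 0` (depending only on `s`) such that for all
`d, m ≥ 1` and `f ∈ F^{s,d}_mix`, `‖f − P_{[-m,m]^d} f‖_∞² ≤ d c_s^d m^{-(2s-1)}`;
consequently `N^∞(ε, F^{s,d}_mix) ≤ (d c_s^d ε^{-2})^{d/(2s-1)}` for all `ε > 0`. -/
theorem statement7 :
    ∀ s : ℝ, 1/2 < s →
      ∃ c : ℝ, 0 < c ∧
        (∀ (d m : ℕ), 1 ≤ d → 1 ≤ m → ∀ f ∈ Fmix s d, ∀ x : Fin d → ℝ,
          ‖f x - ∑ k ∈ boxZ d m, fCoeff d f k * eK d k x‖ ^ 2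
            ≤ d * c ^ d * (m : ℝ) ^ (-(2 * s - 1))) ∧
        (∀ (d : ℕ) (ε : ℝ), 1 ≤ d → 0 < ε →
          ∃ Λ : Finset (Fin d → ℤ),
            (Λ.card : ℝ) ≤ ((d : ℝ) * c ^ d * ε ^ (-2 : ℝ)) ^ ((d : ℝ) / (2 * s - 1)) ∧
            ∀ f ∈ Fmix s d, ∀ x : Fin d → ℝ,
              ‖f x - ∑ k ∈ Λ, fCoeff d f k * eK d k x‖ ≤ ε) := by
  intro s hs
  obtain ⟨K, hK1, hK, hT⟩ := exists_K s hs
  have ha : 0 < 2 * s - 1 := by linarith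
  set a := 2 * s - 1 with ha_def
  have h5 : (1:ℝ) ≤ 5 ^ a := Real.one_le_rpow (by norm_num) ha.le
  have hcK : K ≤ K * 5 ^ a := le_mul_of_one_le_right (by linarith) h5
  refine ⟨K * 5 ^ a, by positivity, ?_, ?_⟩
  · intro d m hd hm f hf x
    refine (part1 hK1 hK hT d m hm f hf x).trans ?_
    have : (0:ℝ) ≤ (m:ℝ) ^ (-a) := Real.rpow_nonneg (by positivity) _
    gcongr
  · intro d ε hd hε
    have hd1 : (1:ℝ) ≤ d := by exact_mod_cast hd
    have hK0 : 0 < K := by linarith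
    rcases le_or_gt 1 ε with h | h
    · refine ⟨∅, ?_, ?_⟩
      · simp only [Finset.card_empty, Nat.cast_zero]
        positivity
      · intro f hf x
        simpa using (norm_le_one_of_Fmix hf x).trans h
    · have hε2 : (1:ℝ) ≤ ε ^ (-2 : ℝ) :=
        Real.one_le_rpow_of_pos_of_le_one_of_nonpos hε h.le (by norm_num)
      set B : ℝ := d * K ^ d * ε ^ (-2 : ℝ) with hB
      have hB1 : 1 ≤ B := by
        have h1 : (1:ℝ) ≤ K ^ d := one_le_pow₀ hK1
        exact one_le_mul_of_one_le_of_one_le (one_le_mul_of_one_le_of_one_le hd1 h1) hε2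
      have hB0 : 0 < B := by linarith
      set t : ℝ := B ^ (1 / a) with ht
      have ht1 : 1 ≤ t := Real.one_le_rpow hB1 (by positivity)
      have hta : t ^ a = B := by
        rw [ht, ← Real.rpow_mul hB0.le, one_div, inv_mul_cancel₀ ha.ne', Real.rpow_one]
      set m : ℕ := ⌈t⌉₊ with hm
      have hmt : t ≤ m := Nat.le_ceil t
      have hm1 : 1 ≤ m := by exact_mod_cast ht1.trans hmt
      have hmt' : (m:ℝ) < t + 1 := Nat.ceil_lt_add_one (by linarith)
      refine ⟨boxZ d m, ?_, ?_⟩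
      · have hcard : ((boxZ d m).card : ℝ) = (2 * m + 1 : ℝ) ^ d := by
          have : (boxZ d m).card = (2 * m + 1) ^ d := by
            rw [boxZ, Fintype.card_piFinset]
            simp only [Int.card_Icc, Finset.prod_const, Finset.card_univ, Fintype.card_fin]
            congr 1
            omega
          rw [this]; push_cast; ring
        rw [hcard]
        have h1 : (2 * m + 1 : ℝ) ≤ 5 * t := by linarith
        have h2 : (5 * t) ^ a ≤ d * (K * 5 ^ a) ^ d * ε ^ (-2 : ℝ) := by
          rw [Real.mul_rpow (by norm_num) (by linarith), hta, mul_pow]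
          have h3 : (5:ℝ) ^ a ≤ ((5:ℝ) ^ a) ^ d := le_self_pow₀ h5 (by omega)
          calc (5:ℝ) ^ a * B ≤ ((5:ℝ) ^ a) ^ d * B := by gcongr
            _ = _ := by rw [hB]; ring
        calc (2 * m + 1 : ℝ) ^ d ≤ (5 * t) ^ d := by gcongr
          _ = ((5 * t) ^ a) ^ ((d:ℝ) / a) := by
            rw [← Real.rpow_mul (by positivity), mul_div_cancel₀ _ ha.ne', Real.rpow_natCast]
          _ ≤ _ := by gcongr
      · intro f hf x
        have h1 := part1 hK1 hK hT d m hm1 f hf x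
        rw [← ha_def] at h1
        have h2 : (m:ℝ) ^ (-a) ≤ B⁻¹ := by
          rw [← hta, ← Real.rpow_neg (by linarith)]
          exact Real.rpow_le_rpow_of_nonpos (by linarith) hmt (by linarith)
        have h3 : (d:ℝ) * K ^ d * (m : ℝ) ^ (-a) ≤ ε ^ 2 := by
          calc (d:ℝ) * K ^ d * (m : ℝ) ^ (-a) ≤ d * K ^ d * B⁻¹ := by gcongr
            _ = ε ^ 2 := by
              have e : ε ^ (-2 : ℝ) = (ε ^ 2)⁻¹ := by
                rw [Real.rpow_neg hε.le]; norm_num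
              have : (0:ℝ) < d := by linarith
              rw [hB, e]
              field_simp
        exact (pow_le_pow_iff_left₀ (norm_nonneg _) hε.le (by norm_num)).1 (h1.trans h3)
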